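/- arXiv:0911.3875 — 7 statements merged into one kernel-verified Lean document; each statement's English description precedes it below -/
import Mathlib

section
/- (Noncommutative root space Witt algebra.) Let K be the bilinear mapping on ℰ given on nonempty words by K(φ, ψ) = φ ˆ (D₁ ψ) − ψ ˆ (D₁ φ). Then K is antisymmetric, K(φ, ψ) = −K(ψ, φ), and for all words φ, ψ, χ over E each of tensor order at least 2 the Jacobi identity holds in ℰ: K(φ, K(ψ, χ)) + K(ψ, K(χ, φ)) + K(χ, K(φ, ψ)) = 0. -/
/-- The gluing (concatenation) operation on words over `E`:
`(xs ++ [a]) ˆ (b :: ys) = xs ++ [a * b] ++ ys`. -/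
def glue {E : Type*} [Mul E] : List E → List E → List E
  | [], ys => ys
  | [a], [] => [a]
  | [a], b :: ys => (a * b) :: ys
  | a :: b :: as, ys => a :: glue (b :: as) ys

/-- `applyAt f k w` applies `f` to the `k`-th (1-based) entry of the word `w`. -/
def applyAt {E : Type*} (f : E → E) : ℕ → List E → List E
  | _, [] => []
  | 0, w => w
  | 1, a :: as => f a :: as
  | k+2, a :: as => a :: applyAt f (k+1) as

/-- The basis element of the root space `ℰ` (the monoid algebra of the free
monoid on `E` over `ℂ`) corresponding to the word `w`, representing the
pure tensor `w₁ ⊗ ⋯ ⊗ w_N`. -/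
noncomputable def bw {E : Type*} (w : List E) : MonoidAlgebra ℂ (FreeMonoid E) :=
  MonoidAlgebra.single (FreeMonoid.ofList w) 1

theorem glue_ne_nil {E : Type*} [Mul E] (a b : List E) (h : a ≠ []) : glue a b ≠ [] := by
  match a, b, h with
  | [x], [], _ => simp [glue]
  | [x], y :: ys, _ => simp [glue]
  | x :: y :: xs, b, _ => simp [glue]

theorem glue_cons_of_ne {E : Type*} [Mul E] (x : E) (a b : List E) (h : a ≠ []) :
    glue (x :: a) b = x :: glue a b := by
  match a, h with
  | y :: ys, _ => simp [glue]

theorem glue_single_assoc {E : Type*} [Semigroup E] (x : E) (b c : List E) :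
    glue (glue [x] b) c = glue [x] (glue b c) := by
  match b, c with
  | [], c => simp [glue]
  | [y], [] => simp [glue]
  | [y], z :: zs => simp [glue, mul_assoc]
  | y :: z :: zs, c => simp [glue]

theorem glue_assoc' {E : Type*} [Semigroup E] (a b c : List E) :
    glue (glue a b) c = glue a (glue b c) := by
  induction a with
  | nil => simp [glue]
  | cons x xs ih =>
    by_cases h : xs = []
    · subst h; exact glue_single_assoc x b c
    · rw [glue_cons_of_ne _ _ _ h, glue_cons_of_ne _ _ _ h,
        glue_cons_of_ne _ _ _ (glue_ne_nil _ _ h), ih]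

theorem applyAt_glue {E : Type*} [Mul E] (f : E → E) (a b : List E) (h : 2 ≤ a.length) :
    applyAt f 1 (glue a b) = glue (applyAt f 1 a) b := by
  match a, h with
  | x :: y :: ys, _ => simp [glue, applyAt]

/-- the noncommutative root space Witt continual Lie algebra.
`K` is the `ℂ`-bilinear map on `ℰ` given on nonempty basis words by
`K(φ, ψ) = φ ˆ (D₁ ψ) − ψ ˆ (D₁ φ)`, vanishing when an argument is the empty
word. Then `K` is antisymmetric, and for words of tensor order at least `2`
the Jacobi identity holds. -/
theorem ncrs_witt
    (E : Type*) [Ring E] [Algebra ℂ E] (d : E →ₗ[ℂ] E)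
    (K : MonoidAlgebra ℂ (FreeMonoid E) →ₗ[ℂ]
         MonoidAlgebra ℂ (FreeMonoid E) →ₗ[ℂ] MonoidAlgebra ℂ (FreeMonoid E))
    (hK : ∀ φ ψ : List E, φ ≠ [] → ψ ≠ [] →
      K (bw φ) (bw ψ) =
        bw (glue φ (applyAt (⇑d) 1 ψ)) - bw (glue ψ (applyAt (⇑d) 1 φ)))
    (hKz : ∀ x, K (bw ([] : List E)) x = 0 ∧ K x (bw ([] : List E)) = 0) :
    (∀ x y, K x y = - K y x) ∧
    (∀ φ ψ χ : List E, 2 ≤ φ.length → 2 ≤ ψ.length → 2 ≤ χ.length →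
      K (bw φ) (K (bw ψ) (bw χ)) + K (bw ψ) (K (bw χ) (bw φ)) +
        K (bw χ) (K (bw φ) (bw ψ)) = 0) := by
  constructor
  · have key : ∀ φ ψ : List E, K (bw φ) (bw ψ) = - K (bw ψ) (bw φ) := by
      intro φ ψ
      by_cases h1 : φ = []
      · subst h1; rw [(hKz _).1, (hKz _).2, neg_zero]
      by_cases h2 : ψ = []
      · subst h2; rw [(hKz _).1, (hKz _).2, neg_zero]
      rw [hK _ _ h1 h2, hK _ _ h2 h1, neg_sub]
    have sg : ∀ (w : FreeMonoid E) (r : ℂ),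
        (MonoidAlgebra.single w r : MonoidAlgebra ℂ (FreeMonoid E)) = r • bw w.toList := by
      intro w r
      simp [bw]
    intro x y
    induction x using MonoidAlgebra.induction_linear with
    | zero => simp
    | add a b ha hb => rw [map_add, map_add, LinearMap.add_apply, ha, hb, neg_add]
    | single w r =>
      induction y using MonoidAlgebra.induction_linear with
      | zero => simp
      | add a b ha hb => rw [map_add, map_add, LinearMap.add_apply, ha, hb, neg_add]
      | single v t =>
        rw [sg, sg]
        simp only [map_smul, LinearMap.smul_apply]
        rw [key, smul_neg, smul_neg, smul_comm]
  · intro φ ψ χ h1 h2 h3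
    have n : ∀ a : List E, 2 ≤ a.length → a ≠ [] := by
      rintro a h rfl
      simp at h
    have m1 := n _ h1
    have m2 := n _ h2
    have m3 := n _ h3
    rw [hK _ _ m2 m3, hK _ _ m3 m1, hK _ _ m1 m2]
    simp only [map_sub]
    simp only [hK _ _ m1 (glue_ne_nil _ _ m2), hK _ _ m1 (glue_ne_nil _ _ m3),
      hK _ _ m2 (glue_ne_nil _ _ m1), hK _ _ m2 (glue_ne_nil _ _ m3),
      hK _ _ m3 (glue_ne_nil _ _ m1), hK _ _ m3 (glue_ne_nil _ _ m2),
      applyAt_glue _ _ _ h1, applyAt_glue _ _ _ h2, applyAt_glue _ _ _ h3, glue_assoc']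
    abel
end

section
/- (Noncommutative root space Ricci flow algebra, identity (7).) Define bilinear mappings on ℰ by K₊(φ, ψ) = φ ⊗ ψ, K₋(φ, ψ) = −ψ ⊗ φ, K₀₀(φ, ψ) = φ ⊗ ψ − ψ ⊗ φ, and K₀(φ, ψ) = D_{ord φ}(φ ˆ ψ) on nonempty words. Then for all nonempty words φ, ψ, χ over E: K₀₀(ψ, K₀(φ, χ)) = K₀(K₊(ψ, φ), χ) + K₀(φ, K₋(ψ, χ)) in ℰ. -/
theorem applyAt_glue_aux {E : Type*} [Mul E] (f : E → E) (xs : List E) (a b : E) (ys : List E) :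
    applyAt f (xs ++ [a]).length (glue (xs ++ [a]) (b :: ys)) = xs ++ f (a * b) :: ys := by
  induction xs with
  | nil => simp [glue, applyAt]
  | cons x xs ih =>
    cases xs with
    | nil => simp [glue, applyAt]
    | cons y zs =>
      simp only [List.cons_append, List.length_cons, glue, applyAt] at ih ⊢
      rw [ih]

/-- the noncommutative root space Ricci flow continual Lie
algebra, identity (7), with `K₀(φ, ψ) = D_{ord φ}(φ ˆ ψ)` on nonempty words. -/
theorem ncrs_ricci_flow_7
    (E : Type*) [Ring E] [Algebra ℂ E] (d : E →ₗ[ℂ] E)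
    (Kp Km K00 K0 : MonoidAlgebra ℂ (FreeMonoid E) →ₗ[ℂ]
         MonoidAlgebra ℂ (FreeMonoid E) →ₗ[ℂ] MonoidAlgebra ℂ (FreeMonoid E))
    (hp : ∀ φ ψ : List E, φ ≠ [] → ψ ≠ [] → Kp (bw φ) (bw ψ) = bw (φ ++ ψ))
    (hm : ∀ φ ψ : List E, φ ≠ [] → ψ ≠ [] → Km (bw φ) (bw ψ) = -bw (ψ ++ φ))
    (h00 : ∀ φ ψ : List E, φ ≠ [] → ψ ≠ [] →
      K00 (bw φ) (bw ψ) = bw (φ ++ ψ) - bw (ψ ++ φ))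
    (h0 : ∀ φ ψ : List E, φ ≠ [] → ψ ≠ [] →
      K0 (bw φ) (bw ψ) = bw (applyAt (⇑d) φ.length (glue φ ψ)))
    (hz : ∀ x, Kp (bw ([] : List E)) x = 0 ∧ Kp x (bw ([] : List E)) = 0 ∧
               Km (bw ([] : List E)) x = 0 ∧ Km x (bw ([] : List E)) = 0 ∧
               K00 (bw ([] : List E)) x = 0 ∧ K00 x (bw ([] : List E)) = 0 ∧
               K0 (bw ([] : List E)) x = 0 ∧ K0 x (bw ([] : List E)) = 0) :
    ∀ φ ψ χ : List E, φ ≠ [] → ψ ≠ [] → χ ≠ [] →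
      K00 (bw ψ) (K0 (bw φ) (bw χ)) =
        K0 (Kp (bw ψ) (bw φ)) (bw χ) + K0 (bw φ) (Km (bw ψ) (bw χ)) := by
  intro φ ψ χ hφ hψ hχ
  obtain ⟨xs, a, rfl⟩ : ∃ xs a, φ = xs ++ [a] :=
    ⟨_, _, (List.dropLast_append_getLast hφ).symm⟩
  obtain ⟨b, ys, rfl⟩ := List.exists_cons_of_ne_nil hχ
  rw [hp _ _ hψ hφ, hm _ _ hψ hχ, map_neg, h0 _ _ hφ hχ, h0 _ _ (by simp) hχ,
    h0 _ _ hφ (by simp), List.cons_append, ← List.append_assoc, applyAt_glue_aux,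
    applyAt_glue_aux, applyAt_glue_aux, h00 _ _ hψ (by simp)]
  simp [sub_eq_add_neg]
end

section
/- (Noncommutative root space Poisson bracket algebra, identity (6).) Define bilinear mappings on ℰ by K₊(φ, ψ) = −i·(∂^{⊗ord} φ) ⊗ ψ, K₋(φ, ψ) = i·ψ ⊗ (∂^{⊗ord} φ), and K₀₀(φ, ψ) = −i·(φ ⊗ ψ − ψ ⊗ φ) on nonempty words, where i is the imaginary unit of ℂ. Then for all nonempty words φ, ψ, χ over E: K₊(K₀₀(φ, ψ), χ) = K₊(φ, K₊(ψ, χ)) − K₊(ψ, K₊(φ, χ)), and the same identity with K₊ replaced by K₋. -/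
/-- the noncommutative root space Poisson bracket continual Lie
algebra, identity (6). On nonempty basis words:
`K₊(φ, ψ) = −i·(∂^{⊗ord} φ) ⊗ ψ`, `K₋(φ, ψ) = i·ψ ⊗ (∂^{⊗ord} φ)`,
`K₀₀(φ, ψ) = −i·(φ ⊗ ψ − ψ ⊗ φ)`. -/
theorem ncrs_poisson_6
    (E : Type*) [Ring E] [Algebra ℂ E] (d : E →ₗ[ℂ] E)
    (Kp Km K00 : MonoidAlgebra ℂ (FreeMonoid E) →ₗ[ℂ]
         MonoidAlgebra ℂ (FreeMonoid E) →ₗ[ℂ] MonoidAlgebra ℂ (FreeMonoid E))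
    (hp : ∀ φ ψ : List E, φ ≠ [] → ψ ≠ [] →
      Kp (bw φ) (bw ψ) = (-Complex.I) • bw (φ.map ⇑d ++ ψ))
    (hm : ∀ φ ψ : List E, φ ≠ [] → ψ ≠ [] →
      Km (bw φ) (bw ψ) = Complex.I • bw (ψ ++ φ.map ⇑d))
    (h00 : ∀ φ ψ : List E, φ ≠ [] → ψ ≠ [] →
      K00 (bw φ) (bw ψ) = (-Complex.I) • (bw (φ ++ ψ) - bw (ψ ++ φ)))
    (hz : ∀ x, Kp (bw ([] : List E)) x = 0 ∧ Kp x (bw ([] : List E)) = 0 ∧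
               Km (bw ([] : List E)) x = 0 ∧ Km x (bw ([] : List E)) = 0 ∧
               K00 (bw ([] : List E)) x = 0 ∧ K00 x (bw ([] : List E)) = 0) :
    ∀ φ ψ χ : List E, φ ≠ [] → ψ ≠ [] → χ ≠ [] →
      Kp (K00 (bw φ) (bw ψ)) (bw χ) =
        Kp (bw φ) (Kp (bw ψ) (bw χ)) - Kp (bw ψ) (Kp (bw φ) (bw χ)) ∧
      Km (K00 (bw φ) (bw ψ)) (bw χ) =
        Km (bw φ) (Km (bw ψ) (bw χ)) - Km (bw ψ) (Km (bw φ) (bw χ)) := by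
  intro φ ψ χ h1 h2 h3
  have a1 : φ ++ ψ ≠ [] := by simp [h1]
  have a2 : ψ ++ φ ≠ [] := by simp [h1]
  have b1 : φ.map ⇑d ++ χ ≠ [] := by simp [h3]
  have b2 : ψ.map ⇑d ++ χ ≠ [] := by simp [h3]
  have c1 : χ ++ φ.map ⇑d ≠ [] := by simp [h3]
  have c2 : χ ++ ψ.map ⇑d ≠ [] := by simp [h3]
  constructor
  · rw [h00 φ ψ h1 h2, hp ψ χ h2 h3, hp φ χ h1 h3]
    simp only [map_smul, map_sub, LinearMap.smul_apply, LinearMap.sub_apply]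
    rw [hp _ _ a1 h3, hp _ _ a2 h3, hp _ _ h1 b2, hp _ _ h2 b1]
    simp only [List.map_append, List.append_assoc]
    module
  · rw [h00 φ ψ h1 h2, hm ψ χ h2 h3, hm φ χ h1 h3]
    simp only [map_smul, map_sub, LinearMap.smul_apply, LinearMap.sub_apply]
    rw [hm _ _ a1 h3, hm _ _ a2 h3, hm _ _ h1 c2, hm _ _ h2 c1]
    simp only [List.map_append, List.append_assoc]
    module
end

section
/- (Noncommutative root space Poisson bracket algebra, identity (7).) Assume ∂ is a ℂ-linear automorphism of E with inverse ∂⁻¹. Define bilinear mappings on ℰ by K₊(φ, ψ) = −i·(∂^{⊗ord} φ) ⊗ ψ, K₋(φ, ψ) = i·ψ ⊗ (∂^{⊗ord} φ), K₀₀(φ, ψ) = −i·(φ ⊗ ψ − ψ ⊗ φ), and K₀(φ, ψ) = −i·(∂⁻¹)^{⊗ord}( D²_{ord φ}(φ ˆ ψ) ) on nonempty words. Then for all nonempty words φ, ψ, χ over E: K₀₀(ψ, K₀(φ, χ)) = K₀(K₊(ψ, φ), χ) + K₀(φ, K₋(ψ, χ)) in ℰ. -/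
theorem glue_snoc {E : Type*} [Mul E] (xs : List E) (a b : E) (ys : List E) :
    glue (xs ++ [a]) (b :: ys) = xs ++ (a * b) :: ys := by
  induction xs with
  | nil => simp [glue]
  | cons x xs ih =>
    cases xs with
    | nil => simp [glue]
    | cons y xs => simpa [glue] using ih

theorem applyAt_mid {E : Type*} (f : E → E) (xs : List E) (c : E) (ys : List E) :
    applyAt f (xs.length + 1) (xs ++ c :: ys) = xs ++ f c :: ys := by
  induction xs with
  | nil => simp [applyAt]
  | cons x xs ih => simpa [applyAt] using ih

/-- the noncommutative root space Poisson bracket continual Lie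
algebra, identity (7). `∂` is a `ℂ`-linear automorphism of `E` with inverse
`∂⁻¹`; on nonempty basis words
`K₀(φ, ψ) = −i·(∂⁻¹)^{⊗ord}( D²_{ord φ}(φ ˆ ψ) )`. -/
theorem ncrs_poisson_7
    (E : Type*) [Ring E] [Algebra ℂ E] (d : E ≃ₗ[ℂ] E)
    (Kp Km K00 K0 : MonoidAlgebra ℂ (FreeMonoid E) →ₗ[ℂ]
         MonoidAlgebra ℂ (FreeMonoid E) →ₗ[ℂ] MonoidAlgebra ℂ (FreeMonoid E))
    (hp : ∀ φ ψ : List E, φ ≠ [] → ψ ≠ [] →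
      Kp (bw φ) (bw ψ) = (-Complex.I) • bw (φ.map ⇑d ++ ψ))
    (hm : ∀ φ ψ : List E, φ ≠ [] → ψ ≠ [] →
      Km (bw φ) (bw ψ) = Complex.I • bw (ψ ++ φ.map ⇑d))
    (h00 : ∀ φ ψ : List E, φ ≠ [] → ψ ≠ [] →
      K00 (bw φ) (bw ψ) = (-Complex.I) • (bw (φ ++ ψ) - bw (ψ ++ φ)))
    (h0 : ∀ φ ψ : List E, φ ≠ [] → ψ ≠ [] →
      K0 (bw φ) (bw ψ) =
        (-Complex.I) •
          bw ((applyAt (fun x => d (d x)) φ.length (glue φ ψ)).map ⇑d.symm))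
    (hz : ∀ x, Kp (bw ([] : List E)) x = 0 ∧ Kp x (bw ([] : List E)) = 0 ∧
               Km (bw ([] : List E)) x = 0 ∧ Km x (bw ([] : List E)) = 0 ∧
               K00 (bw ([] : List E)) x = 0 ∧ K00 x (bw ([] : List E)) = 0 ∧
               K0 (bw ([] : List E)) x = 0 ∧ K0 x (bw ([] : List E)) = 0) :
    ∀ φ ψ χ : List E, φ ≠ [] → ψ ≠ [] → χ ≠ [] →
      K00 (bw ψ) (K0 (bw φ) (bw χ)) =
        K0 (Kp (bw ψ) (bw φ)) (bw χ) + K0 (bw φ) (Km (bw ψ) (bw χ)) := by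
  intro φ ψ χ hφ hψ hχ
  obtain ⟨xs, a, rfl⟩ : ∃ xs a, φ = xs ++ [a] :=
    ⟨φ.dropLast, φ.getLast hφ, (List.dropLast_append_getLast hφ).symm⟩
  obtain ⟨b, ys, rfl⟩ := List.exists_cons_of_ne_nil hχ
  have key : ∀ (us : List E) (vs : List E), K0 (bw (us ++ [a])) (bw (b :: vs)) =
      (-Complex.I) • bw (us.map ⇑d.symm ++ d (a * b) :: vs.map ⇑d.symm) := by
    intro us vs
    rw [h0 _ _ (by simp) (by simp), glue_snoc, List.length_append, List.length_singleton,
      applyAt_mid]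
    simp
  have hmm : (ψ.map ⇑d).map ⇑d.symm = ψ := by simp [Function.comp_def]
  rw [hp _ _ hψ hφ, hm _ _ hψ hχ, key, map_smul, map_smul, map_smul, LinearMap.smul_apply,
    ← List.append_assoc, key, List.cons_append, key, h00 _ _ hψ (by simp),
    List.map_append, List.map_append, hmm]
  simp only [smul_smul, smul_sub, List.append_assoc, List.cons_append]
  simp [sub_eq_add_neg]
end

section
/- (Noncommutative root space integral mapping algebra, identity (6).) Define bilinear mappings on ℰ by K₊(φ, ψ) = −i·( (∂^{⊗ord} φ) ⊗ ψ + ψ ⊗ (∂^{⊗ord}(P φ)) ), K₋(φ, ψ) = i·( (∂^{⊗ord}(P φ)) ⊗ ψ + ψ ⊗ (∂^{⊗ord} φ) ), and K₀₀(φ, ψ) = −i·(φ ⊗ ψ − ψ ⊗ φ) on nonempty words. Then for all nonempty words φ, ψ, χ over E: K₊(K₀₀(φ, ψ), χ) = K₊(φ, K₊(ψ, χ)) − K₊(ψ, K₊(φ, χ)), and the same identity with K₊ replaced by K₋ throughout. -/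
/-- the noncommutative root space integral mapping continual Lie
algebra, identity (6). On nonempty basis words:
`K₊(φ, ψ) = −i·( (∂^{⊗ord} φ) ⊗ ψ + ψ ⊗ (∂^{⊗ord}(P φ)) )`,
`K₋(φ, ψ) = i·( (∂^{⊗ord}(P φ)) ⊗ ψ + ψ ⊗ (∂^{⊗ord} φ) )`,
`K₀₀(φ, ψ) = −i·(φ ⊗ ψ − ψ ⊗ φ)`, where `P` reverses the word. -/
theorem ncrs_integral_6
    (E : Type*) [Ring E] [Algebra ℂ E] (d : E →ₗ[ℂ] E)
    (Kp Km K00 : MonoidAlgebra ℂ (FreeMonoid E) →ₗ[ℂ]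
         MonoidAlgebra ℂ (FreeMonoid E) →ₗ[ℂ] MonoidAlgebra ℂ (FreeMonoid E))
    (hp : ∀ φ ψ : List E, φ ≠ [] → ψ ≠ [] →
      Kp (bw φ) (bw ψ) =
        (-Complex.I) • (bw (φ.map ⇑d ++ ψ) + bw (ψ ++ φ.reverse.map ⇑d)))
    (hm : ∀ φ ψ : List E, φ ≠ [] → ψ ≠ [] →
      Km (bw φ) (bw ψ) =
        Complex.I • (bw (φ.reverse.map ⇑d ++ ψ) + bw (ψ ++ φ.map ⇑d)))
    (h00 : ∀ φ ψ : List E, φ ≠ [] → ψ ≠ [] →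
      K00 (bw φ) (bw ψ) = (-Complex.I) • (bw (φ ++ ψ) - bw (ψ ++ φ)))
    (hz : ∀ x, Kp (bw ([] : List E)) x = 0 ∧ Kp x (bw ([] : List E)) = 0 ∧
               Km (bw ([] : List E)) x = 0 ∧ Km x (bw ([] : List E)) = 0 ∧
               K00 (bw ([] : List E)) x = 0 ∧ K00 x (bw ([] : List E)) = 0) :
    ∀ φ ψ χ : List E, φ ≠ [] → ψ ≠ [] → χ ≠ [] →
      Kp (K00 (bw φ) (bw ψ)) (bw χ) =
        Kp (bw φ) (Kp (bw ψ) (bw χ)) - Kp (bw ψ) (Kp (bw φ) (bw χ)) ∧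
      Km (K00 (bw φ) (bw ψ)) (bw χ) =
        Km (bw φ) (Km (bw ψ) (bw χ)) - Km (bw ψ) (Km (bw φ) (bw χ)) := by
  intro φ ψ χ hφ hψ hχ
  constructor
  · rw [h00 φ ψ hφ hψ, hp ψ χ hψ hχ, hp φ χ hφ hχ]
    simp only [map_smul, map_sub, map_add, LinearMap.smul_apply, LinearMap.sub_apply]
    rw [hp _ _ (by simp [hφ]) hχ, hp _ _ (by simp [hφ]) hχ, hp _ _ hφ (by simp [hχ]),
      hp _ _ hφ (by simp [hχ]), hp _ _ hψ (by simp [hχ]), hp _ _ hψ (by simp [hχ])]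
    simp only [List.map_append, List.reverse_append, List.append_assoc]
    module
  · rw [h00 φ ψ hφ hψ, hm ψ χ hψ hχ, hm φ χ hφ hχ]
    simp only [map_smul, map_sub, map_add, LinearMap.smul_apply, LinearMap.sub_apply]
    rw [hm _ _ (by simp [hφ]) hχ, hm _ _ (by simp [hφ]) hχ, hm _ _ hφ (by simp [hχ]),
      hm _ _ hφ (by simp [hχ]), hm _ _ hψ (by simp [hχ]), hm _ _ hψ (by simp [hχ])]
    simp only [List.map_append, List.reverse_append, List.append_assoc]
    module
end

section
/- (Noncommutative root space integral mapping algebra, identity (7).) Assume ∂ is a ℂ-linear automorphism of E with inverse ∂⁻¹. Define bilinear mappings on ℰ by K₊(φ, ψ) = −i·( (∂^{⊗ord} φ) ⊗ ψ + ψ ⊗ (∂^{⊗ord}(P φ)) ), K₋(φ, ψ) = i·( (∂^{⊗ord}(P φ)) ⊗ ψ + ψ ⊗ (∂^{⊗ord} φ) ), K₀₀(φ, ψ) = −i·(φ ⊗ ψ − ψ ⊗ φ), and K₀(φ, ψ) = −i·(∂⁻¹)^{⊗ord}(φ ⊗ ψ) on nonempty words. Then for all nonempty words φ, ψ, χ over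 E: K₀₀(ψ, K₀(φ, χ)) = K₀(K₊(ψ, φ), χ) + K₀(φ, K₋(ψ, χ)) in ℰ. -/
/-- the noncommutative root space integral mapping continual Lie
algebra, identity (7). `∂` is a `ℂ`-linear automorphism of `E` with inverse
`∂⁻¹`; on nonempty basis words `K₀(φ, ψ) = −i·(∂⁻¹)^{⊗ord}(φ ⊗ ψ)`. -/
theorem ncrs_integral_7
    (E : Type*) [Ring E] [Algebra ℂ E] (d : E ≃ₗ[ℂ] E)
    (Kp Km K00 K0 : MonoidAlgebra ℂ (FreeMonoid E) →ₗ[ℂ]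
         MonoidAlgebra ℂ (FreeMonoid E) →ₗ[ℂ] MonoidAlgebra ℂ (FreeMonoid E))
    (hp : ∀ φ ψ : List E, φ ≠ [] → ψ ≠ [] →
      Kp (bw φ) (bw ψ) =
        (-Complex.I) • (bw (φ.map ⇑d ++ ψ) + bw (ψ ++ φ.reverse.map ⇑d)))
    (hm : ∀ φ ψ : List E, φ ≠ [] → ψ ≠ [] →
      Km (bw φ) (bw ψ) =
        Complex.I • (bw (φ.reverse.map ⇑d ++ ψ) + bw (ψ ++ φ.map ⇑d)))
    (h00 : ∀ φ ψ : List E, φ ≠ [] → ψ ≠ [] →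
      K00 (bw φ) (bw ψ) = (-Complex.I) • (bw (φ ++ ψ) - bw (ψ ++ φ)))
    (h0 : ∀ φ ψ : List E, φ ≠ [] → ψ ≠ [] →
      K0 (bw φ) (bw ψ) = (-Complex.I) • bw ((φ ++ ψ).map ⇑d.symm))
    (hz : ∀ x, Kp (bw ([] : List E)) x = 0 ∧ Kp x (bw ([] : List E)) = 0 ∧
               Km (bw ([] : List E)) x = 0 ∧ Km x (bw ([] : List E)) = 0 ∧
               K00 (bw ([] : List E)) x = 0 ∧ K00 x (bw ([] : List E)) = 0 ∧
               K0 (bw ([] : List E)) x = 0 ∧ K0 x (bw ([] : List E)) = 0) :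
    ∀ φ ψ χ : List E, φ ≠ [] → ψ ≠ [] → χ ≠ [] →
      K00 (bw ψ) (K0 (bw φ) (bw χ)) =
        K0 (Kp (bw ψ) (bw φ)) (bw χ) + K0 (bw φ) (Km (bw ψ) (bw χ)) := by
  intro φ ψ χ hφ hψ hχ
  have e : (⇑d.symm ∘ ⇑d) = id := by
    funext x
    simp
  rw [h0 φ χ hφ hχ, hp ψ φ hψ hφ, hm ψ χ hψ hχ]
  simp only [map_smul, map_add, LinearMap.smul_apply, LinearMap.add_apply]
  rw [h00 _ _ hψ (by simp [hφ]), h0 _ _ (by simp [hφ]) hχ, h0 _ _ (by simp [hφ]) hχ,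
    h0 _ _ hφ (by simp [hχ]), h0 _ _ hφ (by simp [hχ])]
  simp only [List.map_append, List.map_map, e, List.map_id, List.append_assoc]
  simp only [smul_add, smul_sub, smul_smul, neg_mul, mul_neg, neg_neg, Complex.I_mul_I]
  module
end

section
/- (Commutative Poisson bracket continual Lie algebra, full grading.) For n, m ∈ ℤ define K_{n,m}(φ, ψ) = i·( n·(∂ψ)·φ − m·(∂φ)·ψ ) for φ, ψ ∈ E. Then for all k, m, n ∈ ℤ and all φ, ψ, χ ∈ E: K_{n,m}(φ, ψ) = −K_{m,n}(ψ, φ), and K_{k,m+n}(φ, K_{m,n}(ψ, χ)) + K_{m,n+k}(ψ, K_{n,k}(χ, φ)) + K_{n,k+m}(χ, K_{k,m}(φ, ψ)) = 0. -/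
/-- the commutative Poisson bracket continual Lie algebra, full
grading. With `K_{n,m}(φ, ψ) = i·( n·(∂ψ)·φ − m·(∂φ)·ψ )` for a derivation `∂`
of a commutative `ℂ`-algebra `E`, antisymmetry (3) and the graded Jacobi
identity (2) hold. -/
theorem comm_poisson_full
    (E : Type*) [CommRing E] [Algebra ℂ E] (d : E →ₗ[ℂ] E)
    (hleib : ∀ a b : E, d (a * b) = d a * b + a * d b)
    (K : ℤ → ℤ → E → E → E)
    (hK : ∀ (n m : ℤ) (φ ψ : E),
      K n m φ ψ = Complex.I • (n • (d ψ * φ) - m • (d φ * ψ))) :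
    ∀ (k m n : ℤ) (φ ψ χ : E),
      K n m φ ψ = - K m n ψ φ ∧
      K k (m + n) φ (K m n ψ χ) + K m (n + k) ψ (K n k χ φ) +
        K n (k + m) χ (K k m φ ψ) = 0 := by
  intro k m n φ ψ χ
  refine ⟨?_, ?_⟩
  · rw [hK, hK, ← smul_neg, neg_sub]
  · simp only [hK, map_smul, map_sub, map_zsmul, hleib]
    simp only [Algebra.smul_def, zsmul_eq_mul]
    push_cast
    ring
end
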